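/- Let X = [[A, B], [C, D]] be a block matrix with full column rank, and let H₁, H₂ be generic matrices (i.e., matrices whose entries are algebraically independent transcendentals, or drawn from a continuous distribution) independent of each other and of X, with compatible dimensions. Then rank([[H₁A, H₁B], [H₂C, H₂D]]) ≥ rank([[H₁A, 0], [0, H₂D]]) almost surely (equivalently, for generic H₁, H₂). -/

import Mathlib

open Matrix

lemma ext_card {K V ι : Type*} [Field K] [AddCommGroup V] [Module K V] [Finite ι] (v : ι → V)
    {s t : Set ι} (hs : LinearIndepOn K v s) (hst : s ⊆ t) :
    ∃ b ⊆ t, s ⊆ b ∧ b.ncard = Module.finrank K (Submodule.span K (v '' t)) ∧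
      Submodule.span K (v '' b) = Submodule.span K (v '' t) ∧ LinearIndepOn K v b := by
  obtain ⟨b, hbt, hsb, hsp, hb⟩ := exists_linearIndepOn_extension hs hst
  have he : Submodule.span K (v '' b) = Submodule.span K (v '' t) :=
    le_antisymm (Submodule.span_mono (Set.image_mono hbt)) (Submodule.span_le.2 hsp)
  refine ⟨b, hbt, hsb, ?_, he, hb⟩
  rw [← he]
  have : Fintype b := Fintype.ofFinite b
  have h := finrank_span_eq_card (R := K) (b := fun i : b => v i) hb
  rw [Set.image_eq_range, h, Set.ncard_eq_toFinset_card', Set.toFinset_card]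

lemma sel {K V ι : Type*} [Field K] [AddCommGroup V] [Module K V] [Finite ι] (v : ι → V)
    (T₁ T₂ : Set ι) (hT : T₁ ∪ T₂ = Set.univ)
    (a d : ℕ) (ha : a ≤ Module.finrank K (Submodule.span K (v '' T₁)))
    (hd : d ≤ Module.finrank K (Submodule.span K (v '' T₂)))
    (had : a + d ≤ Module.finrank K (Submodule.span K (v '' Set.univ))) :
    ∃ S₁ S₂ : Set ι, S₁ ⊆ T₁ ∧ S₂ ⊆ T₂ ∧ Disjoint S₁ S₂ ∧ S₁.ncard = a ∧ S₂.ncard = d ∧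
      LinearIndepOn K v (S₁ ∪ S₂) := by
  obtain ⟨J₂, hJ₂, -, hc₂, hs₂, hi₂⟩ := ext_card v (linearIndepOn_empty K v) (Set.empty_subset T₂)
  obtain ⟨J, -, hJ, hc, hs, hi⟩ := ext_card v hi₂ (Set.subset_univ J₂)
  have hJ1 : J \ J₂ ⊆ T₁ := by
    rintro x ⟨hx, hx2⟩
    by_contra hx1
    have hxT : x ∈ T₂ := by
      have : x ∈ T₁ ∪ T₂ := hT ▸ Set.mem_univ x
      exact this.resolve_left hx1
    have h1 : v x ∈ Submodule.span K (v '' J₂) := by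
      rw [hs₂]; exact Submodule.subset_span ⟨x, hxT, rfl⟩
    have := hi.mono (Set.insert_subset hx hJ)
    rw [linearIndepOn_insert hx2] at this
    exact this.2 h1
  by_cases h : a ≤ (J \ J₂).ncard
  · obtain ⟨S₁, h1, h1c⟩ := Set.exists_subset_card_eq h
    obtain ⟨S₂, h2, h2c⟩ := Set.exists_subset_card_eq (hc₂ ▸ hd)
    refine ⟨S₁, S₂, h1.trans hJ1, h2.trans hJ₂, ?_, h1c, h2c, hi.mono ?_⟩
    · exact Set.disjoint_of_subset h1 h2 Set.disjoint_sdiff_left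
    · exact Set.union_subset (h1.trans Set.sdiff_subset) (h2.trans hJ)
  · push Not at h
    obtain ⟨I, hI, hJI, hIc, -, hIi⟩ := ext_card v (hi.mono Set.sdiff_subset) hJ1
    obtain ⟨W, hW1, hW2, hWc⟩ := Set.exists_subsuperset_card_eq hJI h.le (hIc ▸ ha)
    obtain ⟨b, hb, hWb, hbc, -, hbi⟩ := ext_card v (hIi.mono hW2)
      (Set.subset_union_left (s := W) (t := T₂))
    have hsp : Submodule.span K (v '' (W ∪ T₂)) = Submodule.span K (v '' Set.univ) := by
      apply le_antisymm (Submodule.span_mono (Set.image_mono (Set.subset_univ _)))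
      rw [← hs]
      refine Submodule.span_mono (Set.image_mono ?_)
      intro x hx
      by_cases hx2 : x ∈ J₂
      · exact Or.inr (hJ₂ hx2)
      · exact Or.inl (hW1 ⟨hx, hx2⟩)
    rw [hsp] at hbc
    have hdb : d ≤ (b \ W).ncard := by
      rw [Set.ncard_sdiff hWb]; omega
    obtain ⟨S₂, h2, h2c⟩ := Set.exists_subset_card_eq hdb
    refine ⟨W, S₂, hW2.trans hI, ?_, ?_, hWc, h2c, hbi.mono ?_⟩
    · intro x hx
      rcases hb (h2 hx).1 with h | h
      · exact absurd h (h2 hx).2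
      · exact h
    · exact Set.disjoint_of_subset_right h2 Set.disjoint_sdiff_right
    · exact Set.union_subset hWb (h2.trans Set.sdiff_subset)

lemma sel' {K V α β : Type*} [Field K] [AddCommGroup V] [Module K V] [Finite α] [Finite β]
    (v : α ⊕ β → V) (a d : ℕ)
    (ha : a ≤ Module.finrank K (Submodule.span K (Set.range (v ∘ Sum.inl))))
    (hd : d ≤ Module.finrank K (Submodule.span K (Set.range (v ∘ Sum.inr))))
    (had : a + d ≤ Module.finrank K (Submodule.span K (Set.range v))) :
    ∃ (f : Fin a → α) (g : Fin d → β), Function.Injective f ∧ Function.Injective g ∧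
      LinearIndependent K (v ∘ Sum.map f g) := by
  obtain ⟨S₁, S₂, h1, h2, -, c1, c2, hi⟩ := sel (K := K) v (Set.range Sum.inl) (Set.range Sum.inr)
    Set.range_inl_union_range_inr a d (by rwa [← Set.range_comp]) (by rwa [← Set.range_comp])
    (by rwa [Set.image_univ])
  have e1 : Fin a ≃ S₁ := (Finite.equivFinOfCardEq c1).symm
  have e2 : Fin d ≃ S₂ := (Finite.equivFinOfCardEq c2).symm
  choose f hf using fun i => h1 (e1 i).2
  choose g hg using fun i => h2 (e2 i).2
  have hfi : Function.Injective f := fun i j h => e1.injective (Subtype.ext (by rw [← hf, ← hf, h]))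
  have hgi : Function.Injective g := fun i j h => e2.injective (Subtype.ext (by rw [← hg, ← hg, h]))
  refine ⟨f, g, hfi, hgi, ?_⟩
  have := hi.linearIndependent.comp (ι' := Fin a ⊕ Fin d)
    (fun x => ⟨Sum.map f g x, by
      rcases x with x | x
      · left; simp [hf]
      · right; simp [hg]⟩) (fun x y h => (hfi.sumMap hgi) (Subtype.ext_iff.1 h))
  exact this

lemma rank_add_le_aux {m n : Type*} [Fintype m] [Fintype n] (P Q : Matrix m n ℂ) :
    (P + Q).rank ≤ P.rank + Q.rank := by
  unfold Matrix.rank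
  refine le_trans (Submodule.finrank_mono ?_) (Submodule.finrank_add_le_finrank_add_finrank _ _)
  rintro _ ⟨x, rfl⟩
  rw [Matrix.mulVecLin_add]
  exact Submodule.add_mem_sup ⟨x, rfl⟩ ⟨x, rfl⟩

lemma rank_diag_le {m₁ m₂ n₁ n₂ : ℕ} (P : Matrix (Fin m₁) (Fin n₁) ℂ) (Q : Matrix (Fin m₂) (Fin n₂) ℂ) :
    (fromBlocks P 0 0 Q).rank ≤ P.rank + Q.rank := by
  have e : fromBlocks P 0 0 Q = fromRows P 0 * fromCols (1 : Matrix (Fin n₁) (Fin n₁) ℂ) (0 : Matrix (Fin n₁) (Fin n₂) ℂ) 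
     + fromRows 0 Q * fromCols (0 : Matrix (Fin n₂) (Fin n₁) ℂ) (1 : Matrix (Fin n₂) (Fin n₂) ℂ) := by
    ext (i|i) (j|j) <;> simp
  have e1 : fromRows P (0 : Matrix (Fin m₂) (Fin n₁) ℂ) = fromRows (1 : Matrix (Fin m₁) (Fin m₁) ℂ) (0 : Matrix (Fin m₂) (Fin m₁) ℂ) * P := by
    simp [Matrix.fromRows_mul]
  have e2 : fromRows (0 : Matrix (Fin m₁) (Fin n₂) ℂ) Q = fromRows (0 : Matrix (Fin m₁) (Fin m₂) ℂ) (1 : Matrix (Fin m₂) (Fin m₂) ℂ) * Q := by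
    simp [Matrix.fromRows_mul]
  rw [e]
  refine (rank_add_le_aux _ _).trans (add_le_add ?_ ?_)
  · exact (rank_mul_le_left _ _).trans (e1 ▸ rank_mul_le_right _ _)
  · exact (rank_mul_le_left _ _).trans (e2 ▸ rank_mul_le_right _ _)



/-- If the block matrix `X = [[A,B],[C,D]]` has full column rank, then
for generic `H₁, H₂` (i.e., for all `(H₁,H₂)` in the complement of a proper
Zariski-closed set, here the non-vanishing locus of a nonzero polynomial in the
entries of `H₁` and `H₂`),
`rank [[H₁A, H₁B],[H₂C, H₂D]] ≥ rank [[H₁A, 0],[0, H₂D]]`. -/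
theorem stmt_0 (m₁ m₂ n₁ n₂ k₁ k₂ : ℕ)
    (A : Matrix (Fin m₁) (Fin n₁) ℂ) (B : Matrix (Fin m₁) (Fin n₂) ℂ)
    (C : Matrix (Fin m₂) (Fin n₁) ℂ) (D : Matrix (Fin m₂) (Fin n₂) ℂ)
    (hX : (Matrix.fromBlocks A B C D).rank = n₁ + n₂) :
    ∃ p : MvPolynomial ((Fin k₁ × Fin m₁) ⊕ (Fin k₂ × Fin m₂)) ℂ, p ≠ 0 ∧
      ∀ (H₁ : Matrix (Fin k₁) (Fin m₁) ℂ) (H₂ : Matrix (Fin k₂) (Fin m₂) ℂ),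
        MvPolynomial.eval
          (Sum.elim (fun q => H₁ q.1 q.2) (fun q => H₂ q.1 q.2)) p ≠ 0 →
        (Matrix.fromBlocks (H₁ * A) (H₁ * B) (H₂ * C) (H₂ * D)).rank ≥
          (Matrix.fromBlocks (H₁ * A) 0 0 (H₂ * D)).rank := by
  set X := Matrix.fromBlocks A B C D with hXdef
  set a := min k₁ A.rank with ha
  set d := min k₂ D.rank with hd
  have hA : A.rank ≤ Module.finrank ℂ (Submodule.span ℂ (Set.range (X.row ∘ Sum.inl))) := by
    have h := rank_submatrix_le (X.submatrix Sum.inl id) id Sum.inl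
    rw [rank_eq_finrank_span_row (X.submatrix Sum.inl id)] at h
    exact h
  have hD : D.rank ≤ Module.finrank ℂ (Submodule.span ℂ (Set.range (X.row ∘ Sum.inr))) := by
    have h := rank_submatrix_le (X.submatrix Sum.inr id) id Sum.inr
    rw [rank_eq_finrank_span_row (X.submatrix Sum.inr id)] at h
    exact h
  have hA' := A.rank_le_width
  have hD' := D.rank_le_width
  have hak : a ≤ k₁ := min_le_left _ _
  have hdk : d ≤ k₂ := min_le_left _ _
  obtain ⟨f, g, hf, hg, hfg⟩ := sel' (K := ℂ) X.row a d ((min_le_right _ _).trans hA)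
    ((min_le_right _ _).trans hD) (by rw [← rank_eq_finrank_span_row, hX]; omega)
  set Y := X.submatrix (Sum.map f g) id with hY
  have hYrow : LinearIndependent ℂ Y.row := hfg
  obtain ⟨N, hN⟩ : ∃ N : Matrix (Fin n₁ ⊕ Fin n₂) (Fin a ⊕ Fin d) ℂ, Y * N = 1 := by
    rw [← mulVec_surjective_iff_exists_right_inverse]
    have hr : Y.rank = Fintype.card (Fin a ⊕ Fin d) := hYrow.rank_matrix
    have : LinearMap.range Y.mulVecLin = ⊤ := by
      apply Submodule.eq_top_of_finrank_eq
      rw [Module.finrank_fintype_fun_eq_card]; exact hr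
    exact LinearMap.range_eq_top.1 this
  let G : Matrix (Fin k₁ ⊕ Fin k₂) (Fin m₁ ⊕ Fin m₂)
      (MvPolynomial ((Fin k₁ × Fin m₁) ⊕ (Fin k₂ × Fin m₂)) ℂ) :=
    fromBlocks (Matrix.of fun i j => MvPolynomial.X (Sum.inl (i, j))) 0 0
      (Matrix.of fun i j => MvPolynomial.X (Sum.inr (i, j)))
  let e : Fin a ⊕ Fin d → Fin k₁ ⊕ Fin k₂ := Sum.map (Fin.castLE hak) (Fin.castLE hdk)
  let Q : Matrix (Fin m₁ ⊕ Fin m₂) (Fin a ⊕ Fin d)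
      (MvPolynomial ((Fin k₁ × Fin m₁) ⊕ (Fin k₂ × Fin m₂)) ℂ) := (X * N).map MvPolynomial.C
  let G' : Matrix (Fin a ⊕ Fin d) (Fin m₁ ⊕ Fin m₂)
      (MvPolynomial ((Fin k₁ × Fin m₁) ⊕ (Fin k₂ × Fin m₂)) ℂ) := G.submatrix e id
  let p : MvPolynomial ((Fin k₁ × Fin m₁) ⊕ (Fin k₂ × Fin m₂)) ℂ := Matrix.det (G' * Q)
  have hp : ∀ (H₁ : Matrix (Fin k₁) (Fin m₁) ℂ) (H₂ : Matrix (Fin k₂) (Fin m₂) ℂ),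
      MvPolynomial.eval (Sum.elim (fun q => H₁ q.1 q.2) (fun q => H₂ q.1 q.2)) p =
        (((fromBlocks H₁ 0 0 H₂ * X).submatrix e id) * N).det := by
    intro H₁ H₂
    obtain ⟨x, hx⟩ : ∃ x : (Fin k₁ × Fin m₁) ⊕ (Fin k₂ × Fin m₂) → ℂ,
      x = Sum.elim (fun q => H₁ q.1 q.2) (fun q => H₂ q.1 q.2) := ⟨_, rfl⟩
    have hx1 : ∀ i j, x (Sum.inl (i, j)) = H₁ i j := fun i j => by rw [hx]; rfl
    have hx2 : ∀ i j, x (Sum.inr (i, j)) = H₂ i j := fun i j => by rw [hx]; rfl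
    rw [← hx]
    clear hx
    simp only [p]
    rw [RingHom.map_det, RingHom.mapMatrix_apply, Matrix.map_mul]
    have h1 : G'.map (MvPolynomial.eval x) =
        (fromBlocks H₁ 0 0 H₂).submatrix e id := by
      ext (i | i) (j | j) <;> simp [G', G, e, hx1, hx2]
    have h2 : Q.map (MvPolynomial.eval x) = X * N := by
      ext i j; simp only [Q, Matrix.map_apply, MvPolynomial.eval_C]
    rw [h1, h2, ← Matrix.mul_assoc]
    rfl
  refine ⟨p, ?_, ?_⟩
  · intro h0
    have h := hp (Matrix.of fun i j => if h : i.1 < a then (if f ⟨i.1, h⟩ = j then 1 else 0) else 0)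
      (Matrix.of fun i j => if h : i.1 < d then (if g ⟨i.1, h⟩ = j then 1 else 0) else 0)
    rw [h0, map_zero] at h
    have h3 : ∀ (H : Matrix (Fin k₁ ⊕ Fin k₂) (Fin m₁ ⊕ Fin m₂) ℂ),
        H.submatrix e id = (1 : Matrix (Fin m₁ ⊕ Fin m₂) (Fin m₁ ⊕ Fin m₂) ℂ).submatrix
          (Sum.map f g) id → (H * X).submatrix e id = Y := by
      intro H hH
      have : (H * X).submatrix e id = H.submatrix e id * X := rfl
      rw [this, hH, hY]
      ext i j
      simp [Matrix.mul_apply, Matrix.one_apply]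
    rw [h3 _ (by ext (i | i) (j | j) <;> simp [e, Matrix.one_apply]), hN, det_one] at h
    exact zero_ne_one h
  · intro H₁ H₂ hne
    rw [hp] at hne
    have hmul : fromBlocks (H₁ * A) (H₁ * B) (H₂ * C) (H₂ * D) = fromBlocks H₁ 0 0 H₂ * X := by
      simp [hXdef, fromBlocks_multiply]
    rw [hmul, ge_iff_le]
    calc _ ≤ (H₁ * A).rank + (H₂ * D).rank := rank_diag_le _ _
      _ ≤ a + d := add_le_add (le_min (rank_le_height _) (rank_mul_le_right _ _))
          (le_min (rank_le_height _) (rank_mul_le_right _ _))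
      _ = (((fromBlocks H₁ 0 0 H₂ * X).submatrix e id) * N).rank := by
          rw [rank_of_isUnit _ ((isUnit_iff_isUnit_det _).2 (isUnit_iff_ne_zero.2 hne))]; simp
      _ ≤ ((fromBlocks H₁ 0 0 H₂ * X).submatrix e id).rank := rank_mul_le_left _ _
      _ ≤ _ := rank_submatrix_le _ _ _
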